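/- arXiv:2507.20661 — 11 statements merged into one kernel-verified Lean document; each statement's English description precedes it below -/
import Mathlib

section
/- Let d be a natural number, let W ⊆ ℝ × ℝ^d be an open set, and let f : ℝ × ℝ^d → ℝ be C^∞ on W (ContDiffOn ℝ ⊤ f W). Then the following are equivalent: (i) f(0, y) = 0 for every point (0, y) ∈ W; (ii) there exists g : ℝ × ℝ^d → ℝ which is C^∞ on W such that f(x, y) = x · g(x, y) for all (x, y) ∈ W. -/
open Set Filter Topology MeasureTheory in
/-- Hadamard's lemma for globally defined smooth functions. -/
theorem hadamard_global {d : ℕ} (F : ℝ × (Fin d → ℝ) → ℝ) (hF : ContDiff ℝ (⊤ : ℕ∞) F)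
    (h0 : ∀ y, F (0, y) = 0) :
    ∃ G : ℝ × (Fin d → ℝ) → ℝ, ContDiff ℝ (⊤ : ℕ∞) G ∧ ∀ p, F p = p.1 * G p := by
  let b : ContDiffBump (0 : ℝ) := ⟨2, 3, by norm_num, by norm_num⟩
  let D : ℝ × (Fin d → ℝ) → ℝ := fun p => fderiv ℝ F p (1, 0)
  have hD : ContDiff ℝ (⊤ : ℕ∞) D :=
    (hF.fderiv_right (m := (⊤ : ℕ∞)) (by simp)).clm_apply contDiff_const
  let g : ℝ × (Fin d → ℝ) → ℝ → ℝ := fun p s => b s * D (-s * p.1, p.2)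
  have hg : ContDiff ℝ (⊤ : ℕ∞) (Function.uncurry g) := by
    have hb : ContDiff ℝ (⊤ : ℕ∞) (b : ℝ → ℝ) := b.contDiff
    have h1 : ContDiff ℝ (⊤ : ℕ∞) (fun q : (ℝ × (Fin d → ℝ)) × ℝ => b q.2) :=
      hb.comp contDiff_snd
    have h2 : ContDiff ℝ (⊤ : ℕ∞) (fun q : (ℝ × (Fin d → ℝ)) × ℝ => D (-q.2 * q.1.1, q.1.2)) := by
      apply hD.comp
      fun_prop
    exact h1.mul h2
  let φ : ℝ → ℝ := (Ioc (0:ℝ) 1).indicator (fun _ => 1)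
  have hφ : LocallyIntegrable φ volume := by
    apply Integrable.locallyIntegrable
    refine (integrable_indicator_iff measurableSet_Ioc).2 ?_
    exact integrableOn_const (by simp)
  have key := contDiffOn_convolution_right_with_param (𝕜 := ℝ) (μ := volume) (f := φ)
    (n := (⊤ : ℕ∞)) (ContinuousLinearMap.mul ℝ ℝ) (g := g) (s := univ)
    (k := Metric.closedBall (0:ℝ) 3) isOpen_univ (isCompact_closedBall _ _)
    (by
      intro p x _ hx
      have : b x = 0 := by
        apply b.zero_of_le_dist
        simp only [Metric.mem_closedBall, not_le] at hx
        exact hx.le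
      simp [g, this]) hφ hg.contDiffOn
  rw [univ_prod_univ, contDiffOn_univ] at key
  refine ⟨fun p => ∫ t in (0:ℝ)..1, D (t * p.1, p.2), ?_, ?_⟩
  · have h3 : ContDiff ℝ (⊤ : ℕ∞) (fun p : ℝ × (Fin d → ℝ) => (p, (0:ℝ))) := by fun_prop
    have h4 := key.comp h3
    convert h4 using 2 with p
    simp only [Function.comp, convolution]
    rw [intervalIntegral.integral_of_le zero_le_one, ← integral_indicator measurableSet_Ioc]
    congr 1
    ext t
    by_cases ht : t ∈ Ioc (0:ℝ) 1
    · have : b (-t) = 1 := by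
        apply b.one_of_mem_closedBall
        simp only [Metric.mem_closedBall, dist_zero_right, norm_neg, Real.norm_eq_abs]
        rw [abs_of_pos ht.1]
        exact ht.2.trans (by norm_num [b])
      simp [φ, ht, g, this]
    · simp [φ, ht]
  · rintro ⟨x, y⟩
    have hd : ∀ t ∈ uIcc (0:ℝ) 1, HasDerivAt (fun t : ℝ => F (t * x, y)) (x * D (t * x, y)) t := by
      intro t _
      have h5 : HasFDerivAt F (fderiv ℝ F (t * x, y)) (t * x, y) :=
        (hF.differentiable (by simp) _).hasFDerivAt
      have h6 : HasDerivAt (fun t : ℝ => (t * x, y)) (x, (0 : Fin d → ℝ)) t := by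
        have := (hasDerivAt_id t).mul_const x
        simp only [one_mul] at this
        exact this.prodMk (hasDerivAt_const t y)
      have h7 := h5.comp_hasDerivAt t h6
      have h8 : ((x, 0) : ℝ × (Fin d → ℝ)) = x • (1, 0) := by simp
      rw [h8, map_smul, smul_eq_mul] at h7
      exact h7
    have hc : Continuous (fun t : ℝ => x * D (t * x, y)) := by
      have := hD.continuous
      fun_prop
    have := intervalIntegral.integral_eq_sub_of_hasDerivAt hd (hc.intervalIntegrable _ _)
    rw [intervalIntegral.integral_const_mul] at this
    simp only [one_mul, zero_mul, h0, sub_zero] at this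
    exact this.symm

open Set Filter Topology in
theorem stmt_0 (d : ℕ) (W : Set (ℝ × (Fin d → ℝ))) (hW : IsOpen W)
    (f : ℝ × (Fin d → ℝ) → ℝ) (hf : ContDiffOn ℝ (⊤ : ℕ∞) f W) :
    (∀ y : Fin d → ℝ, ((0 : ℝ), y) ∈ W → f (0, y) = 0) ↔
      ∃ g : ℝ × (Fin d → ℝ) → ℝ, ContDiffOn ℝ (⊤ : ℕ∞) g W ∧
        ∀ p ∈ W, f p = p.1 * g p := by
  classical
  constructor
  swap
  · rintro ⟨g, -, hg⟩ y hy
    simp [hg _ hy]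
  intro h0
  refine ⟨fun p => if p.1 = 0 then deriv (fun t => f (t, p.2)) 0 else f p / p.1, ?_, ?_⟩
  swap
  · rintro ⟨x, y⟩ hp
    by_cases hx : x = 0
    · subst hx
      simp [h0 y hp]
    · simp only [hx, if_false]
      field_simp
  intro p hp
  apply ContDiffAt.contDiffWithinAt
  have hfa : ∀ q ∈ W, ContDiffAt ℝ (⊤ : ℕ∞) f q := fun q hq => hf.contDiffAt (hW.mem_nhds hq)
  by_cases hx : p.1 = 0
  swap
  · have h1 : ContDiffAt ℝ (⊤ : ℕ∞) (fun q : ℝ × (Fin d → ℝ) => f q / q.1) p :=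
      (hfa p hp).div contDiffAt_fst hx
    refine h1.congr_of_eventuallyEq ?_
    have : ∀ᶠ q : ℝ × (Fin d → ℝ) in 𝓝 p, q.1 ≠ 0 :=
      continuous_fst.continuousAt.eventually_ne hx
    filter_upwards [this] with q hq
    simp [hq]
  obtain ⟨r, hr, hrW⟩ := Metric.nhds_basis_closedBall.mem_iff.1 (hW.mem_nhds hp)
  let b : ContDiffBump p := ⟨r / 2, r, by positivity, by linarith⟩
  have hbW : tsupport b ⊆ W := by
    rw [b.tsupport_eq]; exact hrW
  have hb0 : ∀ q, q ∉ W → b q = 0 := fun q hq =>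
    image_eq_zero_of_notMem_tsupport (fun h => hq (hbW h))
  have hF : ContDiff ℝ (⊤ : ℕ∞) (fun q => b q * f q) := by
    rw [contDiff_iff_contDiffAt]
    intro q
    by_cases hq : q ∈ W
    · exact b.contDiffAt.mul (hfa q hq)
    · have h2 := notMem_tsupport_iff_eventuallyEq.1 (fun h => hq (hbW h))
      refine (contDiffAt_const (c := (0:ℝ))).congr_of_eventuallyEq ?_
      filter_upwards [h2] with z hz
      simp [hz]
  obtain ⟨G, hG, hFG⟩ := hadamard_global _ hF (by
    intro y
    by_cases hy : ((0:ℝ), y) ∈ W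
    · simp [h0 y hy]
    · simp [hb0 _ hy])
  refine hG.contDiffAt.congr_of_eventuallyEq ?_
  have hev : ∀ᶠ q in 𝓝 p, f q = q.1 * G q := by
    filter_upwards [b.eventuallyEq_one] with q hq
    have := hFG q
    simpa [hq] using this
  filter_upwards [hev.eventually_nhds] with q hq
  obtain ⟨x, y⟩ := q
  by_cases hx' : x = 0
  · subst hx'
    simp only [if_true]
    have hcont : ContinuousAt (fun t : ℝ => (t, y)) 0 := by fun_prop
    have h3 : (fun t : ℝ => f (t, y)) =ᶠ[𝓝 0] fun t => t * G (t, y) := hcont.eventually hq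
    rw [h3.deriv_eq]
    have h4 : DifferentiableAt ℝ (fun t : ℝ => G (t, y)) 0 := by
      have := hG.differentiable (by simp)
      fun_prop
    have h5 := (hasDerivAt_id (0:ℝ)).mul h4.hasDerivAt
    have h6 := h5.deriv
    simp only [id, one_mul, zero_mul, add_zero] at h6
    exact h6
  · have := hq.self_of_nhds
    simp only [hx', if_false]
    rw [this]
    simp only
    field_simp
end

section
/- Define the 2×2 real matrices C₁ := (1/2)·[[1,0],[1,0]], D₁ := [[0,0],[0,1]], C₂ := (1/2)·[[0,−1],[0,−1]], D₂ := [[−1,0],[0,0]], N := (1/2)·[[−1,−1],[1,1]]. Define 12×12 real matrices A¹, A², A³, regarded as 6×6 arrays of 2×2 blocks (block (p,q) occupying rows 2p−1, 2p and columns 2q−1, 2q), as follows: for a ∈ {1,2} the only nonzero blocks of A^a are block(1,6) = −D_a, block(2,5) = C_a, block(3,5) = D_a, block(4,6) = −C_a, together with the transposed blocks block(6,1) = −D_aᵀ, block(5,2) = C_aᵀ, block(5,3) = D_aᵀ, block(6,4) = −C_aᵀ; the only nonzero blocks of A³ are block(1,2) = N, block(2,1) = Nᵀ, block(3,4) = −N,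 block(4,3) = −Nᵀ. Then A¹, A², A³ are symmetric, and for all real x, y, z, writing M := x·A¹ + y·A² + z·A³ and c := √(x² + y² + z²), both c·1 − M and c·1 + M are positive semidefinite. -/
open scoped Matrix

noncomputable section

def C₁ : Matrix (Fin 2) (Fin 2) ℝ := (1/2 : ℝ) • !![1, 0; 1, 0]
def D₁ : Matrix (Fin 2) (Fin 2) ℝ := !![0, 0; 0, 1]
def C₂ : Matrix (Fin 2) (Fin 2) ℝ := (1/2 : ℝ) • !![0, -1; 0, -1]
def D₂ : Matrix (Fin 2) (Fin 2) ℝ := !![-1, 0; 0, 0]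
def N : Matrix (Fin 2) (Fin 2) ℝ := (1/2 : ℝ) • !![-1, -1; 1, 1]

/-- Assemble a 12×12 matrix from a 6×6 array of 2×2 blocks: block `(p, q)` occupies
rows `2p, 2p+1` and columns `2q, 2q+1` (0-based indexing). -/
def ofBlocks (B : Matrix (Fin 6) (Fin 6) (Matrix (Fin 2) (Fin 2) ℝ)) :
    Matrix (Fin 12) (Fin 12) ℝ :=
  Matrix.of fun i j =>
    B ⟨i.1 / 2, by have := i.isLt; omega⟩ ⟨j.1 / 2, by have := j.isLt; omega⟩
      ⟨i.1 % 2, by omega⟩ ⟨j.1 % 2, by omega⟩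

def A₁ : Matrix (Fin 12) (Fin 12) ℝ := ofBlocks
  !![0, 0, 0, 0, 0, -D₁;
     0, 0, 0, 0, C₁, 0;
     0, 0, 0, 0, D₁, 0;
     0, 0, 0, 0, 0, -C₁;
     0, C₁ᵀ, D₁ᵀ, 0, 0, 0;
     -D₁ᵀ, 0, 0, -C₁ᵀ, 0, 0]

def A₂ : Matrix (Fin 12) (Fin 12) ℝ := ofBlocks
  !![0, 0, 0, 0, 0, -D₂;
     0, 0, 0, 0, C₂, 0;
     0, 0, 0, 0, D₂, 0;
     0, 0, 0, 0, 0, -C₂;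
     0, C₂ᵀ, D₂ᵀ, 0, 0, 0;
     -D₂ᵀ, 0, 0, -C₂ᵀ, 0, 0]

def A₃ : Matrix (Fin 12) (Fin 12) ℝ := ofBlocks
  !![0, N, 0, 0, 0, 0;
     Nᵀ, 0, 0, 0, 0, 0;
     0, 0, 0, -N, 0, 0;
     0, 0, -Nᵀ, 0, 0, 0;
     0, 0, 0, 0, 0, 0;
     0, 0, 0, 0, 0, 0]

/-- The explicit action of `x A₁ + y A₂ + z A₃` on a vector. -/
def symbolAct (x y z : ℝ) (v : Fin 12 → ℝ) : Fin 12 → ℝ :=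
  ![y * v 10 - z * (v 2 + v 3) / 2, -x * v 11 + z * (v 2 + v 3) / 2,
    (x * v 8 - y * v 9) / 2 + z * (v 1 - v 0) / 2,
    (x * v 8 - y * v 9) / 2 + z * (v 1 - v 0) / 2,
    -y * v 8 + z * (v 6 + v 7) / 2, x * v 9 - z * (v 6 + v 7) / 2,
    -(x * v 10 - y * v 11) / 2 - z * (v 5 - v 4) / 2,
    -(x * v 10 - y * v 11) / 2 - z * (v 5 - v 4) / 2,
    x * (v 2 + v 3) / 2 - y * v 4, -y * (v 2 + v 3) / 2 + x * v 5,
    y * v 0 - x * (v 6 + v 7) / 2, -x * v 1 + y * (v 6 + v 7) / 2]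

lemma ofBlocks_isSymm (B : Matrix (Fin 6) (Fin 6) (Matrix (Fin 2) (Fin 2) ℝ))
    (h : ∀ i j, (B i j)ᵀ = B j i) : (ofBlocks B).IsSymm := by
  ext i j
  simp only [ofBlocks, Matrix.transpose_apply, Matrix.of_apply]
  rw [← h, Matrix.transpose_apply]

lemma A₁_symm : A₁.IsSymm := by
  apply ofBlocks_isSymm
  intro i j
  fin_cases i <;> fin_cases j <;> simp

lemma A₂_symm : A₂.IsSymm := by
  apply ofBlocks_isSymm
  intro i j
  fin_cases i <;> fin_cases j <;> simp

lemma A₃_symm : A₃.IsSymm := by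
  apply ofBlocks_isSymm
  intro i j
  fin_cases i <;> fin_cases j <;> simp

lemma sum_twelve (f : Fin 12 → ℝ) : ∑ i, f i = f 0 + f 1 + f 2 + f 3 + f 4 + f 5 + f 6 + f 7
    + f 8 + f 9 + f 10 + f 11 := by
  rw [Fin.sum_univ_castSucc, Fin.sum_univ_castSucc, Fin.sum_univ_castSucc, Fin.sum_univ_castSucc,
    Fin.sum_univ_eight]
  rfl

lemma ofBlocks_mulVec (B : Matrix (Fin 6) (Fin 6) (Matrix (Fin 2) (Fin 2) ℝ)) (v : Fin 12 → ℝ)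
    (p : Fin 6) (r : Fin 2) (i : Fin 12) (hi : i.1 = 2 * p.1 + r.1) :
    (ofBlocks B *ᵥ v) i =
      B p 0 r 0 * v 0 + B p 0 r 1 * v 1 + B p 1 r 0 * v 2 + B p 1 r 1 * v 3
      + B p 2 r 0 * v 4 + B p 2 r 1 * v 5 + B p 3 r 0 * v 6 + B p 3 r 1 * v 7
      + B p 4 r 0 * v 8 + B p 4 r 1 * v 9 + B p 5 r 0 * v 10 + B p 5 r 1 * v 11 := by
  have h1 : (⟨i.1 / 2, by omega⟩ : Fin 6) = p := by ext; simp only; omega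
  have h2 : (⟨i.1 % 2, by omega⟩ : Fin 2) = r := by ext; simp only; omega
  rw [Matrix.mulVec, dotProduct, sum_twelve]
  simp only [ofBlocks, Matrix.of_apply, h1, h2]
  rfl

lemma ext_twelve {u w : Fin 12 → ℝ}
    (h0 : u 0 = w 0) (h1 : u 1 = w 1) (h2 : u 2 = w 2) (h3 : u 3 = w 3)
    (h4 : u 4 = w 4) (h5 : u 5 = w 5) (h6 : u 6 = w 6) (h7 : u 7 = w 7)
    (h8 : u 8 = w 8) (h9 : u 9 = w 9) (h10 : u 10 = w 10) (h11 : u 11 = w 11) : u = w := by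
  ext i
  fin_cases i
  exacts [h0, h1, h2, h3, h4, h5, h6, h7, h8, h9, h10, h11]

/-- Row `2p + r` of a block matrix whose `p`-th block row is given explicitly. -/
lemma ofBlocks_row (B : Matrix (Fin 6) (Fin 6) (Matrix (Fin 2) (Fin 2) ℝ)) (v : Fin 12 → ℝ)
    (p : Fin 6) (r : Fin 2) (i : Fin 12) (hi : i.1 = 2 * p.1 + r.1)
    (M0 M1 M2 M3 M4 M5 : Matrix (Fin 2) (Fin 2) ℝ) (h0 : B p 0 = M0) (h1 : B p 1 = M1)
    (h2 : B p 2 = M2) (h3 : B p 3 = M3) (h4 : B p 4 = M4) (h5 : B p 5 = M5) :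
    (ofBlocks B *ᵥ v) i =
      M0 r 0 * v 0 + M0 r 1 * v 1 + M1 r 0 * v 2 + M1 r 1 * v 3
      + M2 r 0 * v 4 + M2 r 1 * v 5 + M3 r 0 * v 6 + M3 r 1 * v 7
      + M4 r 0 * v 8 + M4 r 1 * v 9 + M5 r 0 * v 10 + M5 r 1 * v 11 := by
  rw [ofBlocks_mulVec B v p r i hi, h0, h1, h2, h3, h4, h5]

lemma A₁_mulVec (v : Fin 12 → ℝ) : A₁ *ᵥ v = symbolAct 1 0 0 v := by
  apply ext_twelve
  · rw [A₁, ofBlocks_row _ _ 0 0 0 rfl 0 0 0 0 0 (-D₁) rfl rfl rfl rfl rfl rfl]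
    simp [C₁, D₁, symbolAct]; try ring
  · rw [A₁, ofBlocks_row _ _ 0 1 1 rfl 0 0 0 0 0 (-D₁) rfl rfl rfl rfl rfl rfl]
    simp [C₁, D₁, symbolAct]; try ring
  · rw [A₁, ofBlocks_row _ _ 1 0 2 rfl 0 0 0 0 C₁ 0 rfl rfl rfl rfl rfl rfl]
    simp [C₁, D₁, symbolAct]; try ring
  · rw [A₁, ofBlocks_row _ _ 1 1 3 rfl 0 0 0 0 C₁ 0 rfl rfl rfl rfl rfl rfl]
    simp [C₁, D₁, symbolAct]; try ring
  · rw [A₁, ofBlocks_row _ _ 2 0 4 rfl 0 0 0 0 D₁ 0 rfl rfl rfl rfl rfl rfl]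
    simp [C₁, D₁, symbolAct]; try ring
  · rw [A₁, ofBlocks_row _ _ 2 1 5 rfl 0 0 0 0 D₁ 0 rfl rfl rfl rfl rfl rfl]
    simp [C₁, D₁, symbolAct]; try ring
  · rw [A₁, ofBlocks_row _ _ 3 0 6 rfl 0 0 0 0 0 (-C₁) rfl rfl rfl rfl rfl rfl]
    simp [C₁, D₁, symbolAct]; try ring
  · rw [A₁, ofBlocks_row _ _ 3 1 7 rfl 0 0 0 0 0 (-C₁) rfl rfl rfl rfl rfl rfl]
    simp [C₁, D₁, symbolAct]; try ring
  · rw [A₁, ofBlocks_row _ _ 4 0 8 rfl 0 C₁ᵀ D₁ᵀ 0 0 0 rfl rfl rfl rfl rfl rfl]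
    simp [C₁, D₁, symbolAct]; try ring
  · rw [A₁, ofBlocks_row _ _ 4 1 9 rfl 0 C₁ᵀ D₁ᵀ 0 0 0 rfl rfl rfl rfl rfl rfl]
    simp [C₁, D₁, symbolAct]; try ring
  · rw [A₁, ofBlocks_row _ _ 5 0 10 rfl (-D₁ᵀ) 0 0 (-C₁ᵀ) 0 0 rfl rfl rfl rfl rfl rfl]
    simp [C₁, D₁, symbolAct]; try ring
  · rw [A₁, ofBlocks_row _ _ 5 1 11 rfl (-D₁ᵀ) 0 0 (-C₁ᵀ) 0 0 rfl rfl rfl rfl rfl rfl]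
    simp [C₁, D₁, symbolAct]; try ring

lemma A₂_mulVec (v : Fin 12 → ℝ) : A₂ *ᵥ v = symbolAct 0 1 0 v := by
  apply ext_twelve
  · rw [A₂, ofBlocks_row _ _ 0 0 0 rfl 0 0 0 0 0 (-D₂) rfl rfl rfl rfl rfl rfl]
    simp [C₂, D₂, symbolAct]; try ring
  · rw [A₂, ofBlocks_row _ _ 0 1 1 rfl 0 0 0 0 0 (-D₂) rfl rfl rfl rfl rfl rfl]
    simp [C₂, D₂, symbolAct]; try ring
  · rw [A₂, ofBlocks_row _ _ 1 0 2 rfl 0 0 0 0 C₂ 0 rfl rfl rfl rfl rfl rfl]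
    simp [C₂, D₂, symbolAct]; try ring
  · rw [A₂, ofBlocks_row _ _ 1 1 3 rfl 0 0 0 0 C₂ 0 rfl rfl rfl rfl rfl rfl]
    simp [C₂, D₂, symbolAct]; try ring
  · rw [A₂, ofBlocks_row _ _ 2 0 4 rfl 0 0 0 0 D₂ 0 rfl rfl rfl rfl rfl rfl]
    simp [C₂, D₂, symbolAct]; try ring
  · rw [A₂, ofBlocks_row _ _ 2 1 5 rfl 0 0 0 0 D₂ 0 rfl rfl rfl rfl rfl rfl]
    simp [C₂, D₂, symbolAct]; try ring
  · rw [A₂, ofBlocks_row _ _ 3 0 6 rfl 0 0 0 0 0 (-C₂) rfl rfl rfl rfl rfl rfl]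
    simp [C₂, D₂, symbolAct]; try ring
  · rw [A₂, ofBlocks_row _ _ 3 1 7 rfl 0 0 0 0 0 (-C₂) rfl rfl rfl rfl rfl rfl]
    simp [C₂, D₂, symbolAct]; try ring
  · rw [A₂, ofBlocks_row _ _ 4 0 8 rfl 0 C₂ᵀ D₂ᵀ 0 0 0 rfl rfl rfl rfl rfl rfl]
    simp [C₂, D₂, symbolAct]; try ring
  · rw [A₂, ofBlocks_row _ _ 4 1 9 rfl 0 C₂ᵀ D₂ᵀ 0 0 0 rfl rfl rfl rfl rfl rfl]
    simp [C₂, D₂, symbolAct]; try ring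
  · rw [A₂, ofBlocks_row _ _ 5 0 10 rfl (-D₂ᵀ) 0 0 (-C₂ᵀ) 0 0 rfl rfl rfl rfl rfl rfl]
    simp [C₂, D₂, symbolAct]; try ring
  · rw [A₂, ofBlocks_row _ _ 5 1 11 rfl (-D₂ᵀ) 0 0 (-C₂ᵀ) 0 0 rfl rfl rfl rfl rfl rfl]
    simp [C₂, D₂, symbolAct]; try ring

lemma A₃_mulVec (v : Fin 12 → ℝ) : A₃ *ᵥ v = symbolAct 0 0 1 v := by
  apply ext_twelve
  · rw [A₃, ofBlocks_row _ _ 0 0 0 rfl 0 N 0 0 0 0 rfl rfl rfl rfl rfl rfl]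
    simp [N, symbolAct]; try ring
  · rw [A₃, ofBlocks_row _ _ 0 1 1 rfl 0 N 0 0 0 0 rfl rfl rfl rfl rfl rfl]
    simp [N, symbolAct]; try ring
  · rw [A₃, ofBlocks_row _ _ 1 0 2 rfl Nᵀ 0 0 0 0 0 rfl rfl rfl rfl rfl rfl]
    simp [N, symbolAct]; try ring
  · rw [A₃, ofBlocks_row _ _ 1 1 3 rfl Nᵀ 0 0 0 0 0 rfl rfl rfl rfl rfl rfl]
    simp [N, symbolAct]; try ring
  · rw [A₃, ofBlocks_row _ _ 2 0 4 rfl 0 0 0 (-N) 0 0 rfl rfl rfl rfl rfl rfl]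
    simp [N, symbolAct]; try ring
  · rw [A₃, ofBlocks_row _ _ 2 1 5 rfl 0 0 0 (-N) 0 0 rfl rfl rfl rfl rfl rfl]
    simp [N, symbolAct]; try ring
  · rw [A₃, ofBlocks_row _ _ 3 0 6 rfl 0 0 (-Nᵀ) 0 0 0 rfl rfl rfl rfl rfl rfl]
    simp [N, symbolAct]; try ring
  · rw [A₃, ofBlocks_row _ _ 3 1 7 rfl 0 0 (-Nᵀ) 0 0 0 rfl rfl rfl rfl rfl rfl]
    simp [N, symbolAct]; try ring
  · rw [A₃, ofBlocks_row _ _ 4 0 8 rfl 0 0 0 0 0 0 rfl rfl rfl rfl rfl rfl]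
    simp [N, symbolAct]; try ring
  · rw [A₃, ofBlocks_row _ _ 4 1 9 rfl 0 0 0 0 0 0 rfl rfl rfl rfl rfl rfl]
    simp [N, symbolAct]; try ring
  · rw [A₃, ofBlocks_row _ _ 5 0 10 rfl 0 0 0 0 0 0 rfl rfl rfl rfl rfl rfl]
    simp [N, symbolAct]; try ring
  · rw [A₃, ofBlocks_row _ _ 5 1 11 rfl 0 0 0 0 0 0 rfl rfl rfl rfl rfl rfl]
    simp [N, symbolAct]; try ring

lemma symbol_mulVec (x y z : ℝ) (v : Fin 12 → ℝ) :
    (x • A₁ + y • A₂ + z • A₃) *ᵥ v = symbolAct x y z v := by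
  simp only [Matrix.add_mulVec, Matrix.smul_mulVec, A₁_mulVec, A₂_mulVec, A₃_mulVec]
  apply ext_twelve <;> simp [symbolAct] <;> ring

lemma symbol_norm (x y z : ℝ) (v : Fin 12 → ℝ) :
    symbolAct x y z v ⬝ᵥ symbolAct x y z v ≤ (x^2 + y^2 + z^2) * (v ⬝ᵥ v) := by
  have key : (x^2 + y^2 + z^2) * (v ⬝ᵥ v) - symbolAct x y z v ⬝ᵥ symbolAct x y z v
      = (x * v 10 + y * v 11 - z * (v 4 + v 5))^2 / 2
        + (z * v 10 + y * ((v 2 + v 3) / 2) + x * v 4)^2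
        + (z * v 11 + x * ((v 2 + v 3) / 2) + y * v 5)^2
        + (x^2 + y^2 + z^2) * (v 2 - v 3)^2 / 2
        + (x * v 8 + y * v 9 - z * (v 0 + v 1))^2 / 2
        + (z * v 8 + y * ((v 6 + v 7) / 2) + x * v 0)^2
        + (z * v 9 + x * ((v 6 + v 7) / 2) + y * v 1)^2
        + (x^2 + y^2 + z^2) * (v 6 - v 7)^2 / 2 := by
    rw [dotProduct, dotProduct, sum_twelve, sum_twelve]
    simp [symbolAct]
    ring
  have : 0 ≤ (x^2 + y^2 + z^2) * (v ⬝ᵥ v) - symbolAct x y z v ⬝ᵥ symbolAct x y z v := by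
    rw [key]; positivity
  linarith

/-- If `|M v|² ≤ c² |v|²` for all `v` then `M ≤ c`. -/
lemma posSemidef_of_norm {M : Matrix (Fin 12) (Fin 12) ℝ} (hM : M.IsSymm) {c : ℝ} (hc : 0 ≤ c)
    (h : ∀ v, (M *ᵥ v) ⬝ᵥ (M *ᵥ v) ≤ c^2 * (v ⬝ᵥ v)) :
    (c • (1 : Matrix (Fin 12) (Fin 12) ℝ) - M).PosSemidef := by
  refine Matrix.PosSemidef.of_dotProduct_mulVec_nonneg ?_ ?_
  · rw [Matrix.IsHermitian, Matrix.conjTranspose_eq_transpose_of_trivial]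
    simp [hM.eq]
  · intro v
    have hv := h v
    rw [Matrix.sub_mulVec, Matrix.smul_mulVec, Matrix.one_mulVec]
    generalize M *ᵥ v = w at hv
    simp only [star_trivial, dotProduct_sub, dotProduct_smul, smul_eq_mul]
    rcases hc.eq_or_lt with rfl | hc
    · have hw : w = 0 := by
        rw [← dotProduct_self_eq_zero]
        refine le_antisymm (by simpa using hv) ?_
        exact Finset.sum_nonneg fun i _ => mul_self_nonneg _
      simp [hw]
    · have h2 : 0 ≤ (c • v - w) ⬝ᵥ (c • v - w) :=
        Finset.sum_nonneg fun i _ => mul_self_nonneg _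
      simp only [dotProduct_sub, sub_dotProduct, dotProduct_smul, smul_dotProduct,
        smul_eq_mul, dotProduct_comm w v] at h2
      have h3 : 0 ≤ c * (c * (v ⬝ᵥ v) - v ⬝ᵥ w) := by nlinarith
      exact nonneg_of_mul_nonneg_right h3 hc

theorem stmt_6 :
    A₁.IsSymm ∧ A₂.IsSymm ∧ A₃.IsSymm ∧
    ∀ x y z : ℝ,
      (Real.sqrt (x^2 + y^2 + z^2) • (1 : Matrix (Fin 12) (Fin 12) ℝ)
          - (x • A₁ + y • A₂ + z • A₃)).PosSemidef ∧
      (Real.sqrt (x^2 + y^2 + z^2) • (1 : Matrix (Fin 12) (Fin 12) ℝ)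
          + (x • A₁ + y • A₂ + z • A₃)).PosSemidef := by
  refine ⟨A₁_symm, A₂_symm, A₃_symm, fun x y z => ?_⟩
  have hM : (x • A₁ + y • A₂ + z • A₃).IsSymm :=
    ((A₁_symm.smul x).add (A₂_symm.smul y)).add (A₃_symm.smul z)
  have hs : Real.sqrt (x^2 + y^2 + z^2) ^ 2 = x^2 + y^2 + z^2 := Real.sq_sqrt (by positivity)
  refine ⟨posSemidef_of_norm hM (Real.sqrt_nonneg _) fun v => ?_, ?_⟩
  · rw [hs, symbol_mulVec]
    exact symbol_norm x y z v
  · rw [← sub_neg_eq_add]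
    refine posSemidef_of_norm hM.neg (Real.sqrt_nonneg _) fun v => ?_
    rw [hs, Matrix.neg_mulVec, neg_dotProduct_neg, symbol_mulVec]
    exact symbol_norm x y z v
end
end

section
/- Let e and h be trace-free symmetric real 2×2 matrices, let J be the 2×2 real matrix with rows (0, −1), (1, 0), let ρ ∈ [0, 1] and χ ∈ ℝ. If (h − J·e) + ρ·(cos χ · (h + J·e) + sin χ · J·(h + J·e)) = 0, then ⟨e, J·h⟩ = −((1 − ρ²)/(2(1 + ρ²))) · (‖e‖² + ‖h‖²), where ⟨·,·⟩ and ‖·‖ are the Frobenius inner product and norm. -/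
open scoped Matrix

noncomputable section

def J : Matrix (Fin 2) (Fin 2) ℝ := !![0, -1; 1, 0]

theorem stmt_7 (e h : Matrix (Fin 2) (Fin 2) ℝ)
    (he : e.IsSymm) (he0 : e.trace = 0) (hh : h.IsSymm) (hh0 : h.trace = 0)
    (ρ χ : ℝ) (hρ0 : 0 ≤ ρ) (hρ1 : ρ ≤ 1)
    (hbc : (h - J * e) +
        ρ • (Real.cos χ • (h + J * e) + Real.sin χ • (J * (h + J * e))) = 0) :
    (eᵀ * (J * h)).trace =
      -((1 - ρ^2) / (2 * (1 + ρ^2))) * ((eᵀ * e).trace + (hᵀ * h).trace) := by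
  have e10 : e 1 0 = e 0 1 := he.apply 0 1
  have h10 : h 1 0 = h 0 1 := hh.apply 0 1
  have e11 : e 1 1 = -e 0 0 := by
    rw [Matrix.trace_fin_two] at he0; linarith
  have h11 : h 1 1 = -h 0 0 := by
    rw [Matrix.trace_fin_two] at hh0; linarith
  have h1 := congrFun (congrFun hbc 0) 0
  have h2 := congrFun (congrFun hbc 0) 1
  simp only [Matrix.add_apply, Matrix.sub_apply, Matrix.smul_apply, Matrix.mul_apply,
    Fin.sum_univ_two, Matrix.zero_apply, smul_eq_mul] at h1 h2
  simp [J, e10, h10, e11, h11] at h1 h2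
  simp only [J, Matrix.trace_fin_two, Matrix.mul_apply, Fin.sum_univ_two, Matrix.transpose_apply]
  simp [e10, h10, e11, h11]
  generalize e 0 0 = a at *
  generalize e 0 1 = b at *
  generalize h 0 0 = c at *
  generalize h 0 1 = d at *
  have hs := Real.sin_sq_add_cos_sq χ
  generalize Real.sin χ = s at *
  generalize Real.cos χ = k at *
  have f1 : c + b = -(ρ * (k * (c - b) - s * (d + a))) := by linear_combination h1
  have f2 : d - a = -(ρ * (k * (d + a) + s * (c - b))) := by linear_combination h2
  have key : (c + b)^2 + (d - a)^2 = ρ^2 * ((c - b)^2 + (d + a)^2) := by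
    rw [f1, f2]
    linear_combination (ρ^2 * ((c - b)^2 + (d + a)^2)) * hs
  have hp : (1 + ρ^2) ≠ 0 := by positivity
  field_simp
  linear_combination 2 * key
end
end

section
/- Let u⋆, v⋆, w⋆, τ⋆ be real numbers and define P(τ) := 1 + v⋆·(τ − τ⋆) + (u⋆·w⋆/2)·(τ − τ⋆)², u(τ) := u⋆ / P(τ)², v(τ) := (v⋆ + u⋆·w⋆·(τ − τ⋆)) / P(τ), w(τ) := w⋆ · P(τ). Then u(τ⋆) = u⋆, v(τ⋆) = v⋆, w(τ⋆) = w⋆, and at every τ ∈ ℝ with P(τ) ≠ 0 the functions u, v, w are differentiable and satisfy u'(τ) = −2·v(τ)·u(τ), v'(τ) = −v(τ)² + u(τ)·w(τ), and w'(τ) = v(τ)·w(τ). -/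
theorem stmt_9 (u₀ v₀ w₀ τ₀ : ℝ) (P u v w : ℝ → ℝ)
    (hP : ∀ τ : ℝ, P τ = 1 + v₀ * (τ - τ₀) + (u₀ * w₀ / 2) * (τ - τ₀)^2)
    (hu : ∀ τ : ℝ, u τ = u₀ / (P τ)^2)
    (hv : ∀ τ : ℝ, v τ = (v₀ + u₀ * w₀ * (τ - τ₀)) / P τ)
    (hw : ∀ τ : ℝ, w τ = w₀ * P τ) :
    u τ₀ = u₀ ∧ v τ₀ = v₀ ∧ w τ₀ = w₀ ∧
    ∀ τ : ℝ, P τ ≠ 0 →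
      HasDerivAt u (-2 * v τ * u τ) τ ∧
      HasDerivAt v (-(v τ)^2 + u τ * w τ) τ ∧
      HasDerivAt w (v τ * w τ) τ := by
  have hP0 : P τ₀ = 1 := by simp [hP]
  refine ⟨by simp [hu, hP0], by simp [hv, hP0], by simp [hw, hP0], ?_⟩
  intro τ hτ
  have hid : HasDerivAt (fun t : ℝ => t - τ₀) 1 τ := (hasDerivAt_id τ).sub_const τ₀
  have hN : HasDerivAt (fun t : ℝ => v₀ + u₀ * w₀ * (t - τ₀)) (u₀ * w₀) τ := by
    simpa using (hid.const_mul (u₀ * w₀)).const_add v₀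
  have hPd : HasDerivAt P (v₀ + u₀ * w₀ * (τ - τ₀)) τ := by
    have h := ((hid.const_mul v₀).const_add 1).fun_add ((hid.fun_pow 2).const_mul (u₀ * w₀ / 2))
    rw [funext hP]
    refine h.congr_deriv ?_
    norm_num
    ring
  refine ⟨?_, ?_, ?_⟩
  · have h := (hasDerivAt_const τ u₀).fun_div (hPd.fun_pow 2) (pow_ne_zero 2 hτ)
    rw [← funext hu] at h
    refine h.congr_deriv ?_
    rw [hu, hv]
    field_simp
    norm_num
    try ring
  · have h := hN.fun_div hPd hτ
    rw [← funext hv] at h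
    refine h.congr_deriv ?_
    rw [hu, hv, hw]
    field_simp
    try ring
  · have h := hPd.const_mul w₀
    rw [← funext hw] at h
    refine h.congr_deriv ?_
    rw [hv, hw]
    field_simp
end

section
/- Let v and w be real numbers and define g(τ) := 2(v + τ) / (w + (v + τ)²). Then at every τ ∈ ℝ with w + (v + τ)² ≠ 0, the function g is twice differentiable and satisfies g''(τ) + 3·g(τ)·g'(τ) + g(τ)³ = 0. -/
theorem stmt_10 (v w : ℝ) (g : ℝ → ℝ)
    (hg : ∀ τ : ℝ, g τ = 2 * (v + τ) / (w + (v + τ)^2)) :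
    ∀ τ : ℝ, w + (v + τ)^2 ≠ 0 →
      DifferentiableAt ℝ g τ ∧ DifferentiableAt ℝ (deriv g) τ ∧
      deriv (deriv g) τ + 3 * g τ * deriv g τ + (g τ)^3 = 0 := by
  intro τ hτ
  have hs : ∀ x : ℝ, HasDerivAt (fun t : ℝ => v + t) 1 x := fun x =>
    (hasDerivAt_id x).const_add v
  have hD : ∀ x : ℝ, HasDerivAt (fun t : ℝ => w + (v + t)^2) (2 * (v + x)) x := by
    intro x
    have h := ((hs x).fun_pow 2).const_add w
    refine h.congr_deriv ?_
    simp
  have h1 : ∀ x : ℝ, w + (v + x)^2 ≠ 0 →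
      HasDerivAt g ((2 * w - 2 * (v + x)^2) / (w + (v + x)^2)^2) x := by
    intro x hx
    have h := ((hs x).const_mul 2).fun_div (hD x) hx
    rw [funext hg]
    refine h.congr_deriv ?_
    congr 1
    ring
  have hev : deriv g =ᶠ[nhds τ] fun x => (2 * w - 2 * (v + x)^2) / (w + (v + x)^2)^2 := by
    filter_upwards [(hD τ).continuousAt.eventually_ne hτ] with x hx
    exact (h1 x hx).deriv
  have hN : HasDerivAt (fun t : ℝ => 2 * w - 2 * (v + t)^2) (-(4 * (v + τ))) τ := by
    have h := (((hs τ).fun_pow 2).const_mul 2).const_sub (2 * w)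
    refine h.congr_deriv ?_
    simp
    ring
  have h2 := (hN.fun_div ((hD τ).fun_pow 2) (pow_ne_zero 2 hτ)).congr_of_eventuallyEq hev
  refine ⟨(h1 τ hτ).differentiableAt, h2.differentiableAt, ?_⟩
  rw [h2.deriv, (h1 τ hτ).deriv, hg τ]
  field_simp
  push_cast
  ring
end

section
/- Let f be a real number and define Γ(τ) := −f·τ / (1 − f·τ²/2). Then Γ(0) = 0 and Γ'(0) = −f, and at every τ ∈ ℝ with 1 − f·τ²/2 ≠ 0 the function Γ is twice differentiable and satisfies Γ''(τ) + 3·Γ(τ)·Γ'(τ) + Γ(τ)³ = 0. -/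
theorem stmt_11 (f : ℝ) (Γ : ℝ → ℝ)
    (hΓ : ∀ τ : ℝ, Γ τ = -f * τ / (1 - f * τ^2 / 2)) :
    Γ 0 = 0 ∧ deriv Γ 0 = -f ∧
    ∀ τ : ℝ, 1 - f * τ^2 / 2 ≠ 0 →
      DifferentiableAt ℝ Γ τ ∧ DifferentiableAt ℝ (deriv Γ) τ ∧
      deriv (deriv Γ) τ + 3 * Γ τ * deriv Γ τ + (Γ τ)^3 = 0 := by
  have hfun : Γ = fun τ => -f * τ / (1 - f * τ^2 / 2) := funext hΓ
  have hsq : ∀ τ : ℝ, HasDerivAt (fun t : ℝ => t^2) (2 * τ) τ := fun τ => by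
    simpa using hasDerivAt_pow 2 τ
  have hD : ∀ τ : ℝ, HasDerivAt (fun t : ℝ => 1 - f * t^2 / 2) (-f * τ) τ := fun τ => by
    have h := (((hsq τ).const_mul f).div_const 2).const_sub 1
    refine h.congr_deriv ?_
    ring
  have hN : ∀ τ : ℝ, HasDerivAt (fun t : ℝ => -f * t) (-f) τ := fun τ => by
    simpa using (hasDerivAt_id τ).const_mul (-f)
  have h1 : ∀ τ : ℝ, 1 - f * τ^2 / 2 ≠ 0 → HasDerivAt Γ
      ((-f * (1 - f * τ^2 / 2) - f^2 * τ^2) / (1 - f * τ^2 / 2)^2) τ := fun τ h => by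
    rw [hfun]
    have h' := (hN τ).fun_div (hD τ) h
    refine h'.congr_deriv ?_
    ring
  have h2 : ∀ τ : ℝ, 1 - f * τ^2 / 2 ≠ 0 → HasDerivAt (deriv Γ)
      (((-f * (-f * τ) - f^2 * (2 * τ)) * (1 - f * τ^2 / 2)^2
        - (-f * (1 - f * τ^2 / 2) - f^2 * τ^2) * (2 * (1 - f * τ^2 / 2) * (-f * τ)))
        / ((1 - f * τ^2 / 2)^2)^2) τ := fun τ h => by
    have hn := ((hD τ).const_mul (-f)).fun_sub ((hsq τ).const_mul (f^2))
    have hd : HasDerivAt (fun t : ℝ => (1 - f * t^2 / 2)^2)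
        (2 * (1 - f * τ^2 / 2) * (-f * τ)) τ := by
      simpa using (hD τ).fun_pow 2
    have hq := hn.fun_div hd (pow_ne_zero 2 h)
    refine hq.congr_of_eventuallyEq ?_
    filter_upwards [(hD τ).continuousAt.eventually_ne h] with t ht
    exact (h1 t ht).deriv
  refine ⟨by simp [hΓ], ?_, fun τ h => ⟨(h1 τ h).differentiableAt, (h2 τ h).differentiableAt, ?_⟩⟩
  · rw [(h1 0 (by simp)).deriv]
    simp
  · rw [(h2 τ h).deriv, (h1 τ h).deriv, hΓ]
    obtain ⟨D, hDe⟩ : ∃ D, D = 1 - f * τ^2 / 2 := ⟨_, rfl⟩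
    rw [← hDe] at h ⊢
    field_simp
    ring
end

section
/- Let n ≥ 3 be an integer and m > 0 a real number. Define f(s) := 1 + s² and f_m(s) := 1 + s² − 2m/s^(n−2) for s > 0, and let r⋆ be the unique positive real with r⋆^n + r⋆^(n−2) = 2m. Then for every r > r⋆ the function s ↦ f_m(s)^(−1/2) is integrable on the interval (r⋆, r], and, defining x(r) := exp(−∫₀^r f(s)^(−1/2) ds) and x_m(r) := exp(−∫_{r⋆}^r f_m(s)^(−1/2) ds) for r > r⋆, there exists a real number L > 0 such that x_m(r)/x(r) tends to L as r → ∞. -/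
open Filter MeasureTheory

theorem aux_rpow (x : ℝ) (hx : 0 ≤ x) : x ^ (-(1/2) : ℝ) = (Real.sqrt x)⁻¹ := by
  rw [Real.rpow_neg hx, Real.sqrt_eq_rpow]

theorem aux_lower (n : ℕ) (hn : 3 ≤ n) (m r₀ s : ℝ) (hr₀ : 0 < r₀)
    (hroot : r₀^n + r₀^(n-2) = 2*m) (hs : r₀ < s) :
    s^2 - r₀^2 ≤ 1 + s^2 - 2*m/s^(n-2) := by
  obtain ⟨k, rfl⟩ : ∃ k, n = k + 2 := ⟨n - 2, by omega⟩
  simp only [Nat.add_sub_cancel] at *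
  have hs0 : 0 < s := hr₀.trans hs
  have h1 : r₀ ^ k ≤ s ^ k := by gcongr
  have h2 : 2*m/s^k ≤ 1 + r₀^2 := by
    rw [div_le_iff₀ (by positivity), ← hroot]
    have : r₀ ^ (k+2) + r₀ ^ k = (1 + r₀^2) * r₀^k := by ring
    rw [this]
    gcongr
  linarith

theorem aux_diff (r₀ s F : ℝ) (hr₀ : 0 < r₀) (hs : 2 * r₀ ≤ s)
    (h1 : s^2 - r₀^2 ≤ F) (h2 : F ≤ 1 + s^2) :
    ‖(Real.sqrt F)⁻¹ - (Real.sqrt (1+s^2))⁻¹‖ ≤ 2 * (1 + r₀^2) * s ^ (-3 : ℝ) := by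
  have hs0 : 0 < s := by linarith
  have hF : (s/2)^2 ≤ F := by nlinarith
  have ha : s/2 ≤ Real.sqrt F := Real.le_sqrt_of_sq_le hF
  have hb : s ≤ Real.sqrt (1+s^2) := Real.le_sqrt_of_sq_le (by linarith)
  have hab : Real.sqrt F ≤ Real.sqrt (1+s^2) := Real.sqrt_le_sqrt h2
  have ha2 : Real.sqrt F ^ 2 = F := Real.sq_sqrt (by nlinarith [sq_nonneg (s/2)])
  have hb2 : Real.sqrt (1+s^2) ^ 2 = 1 + s^2 := Real.sq_sqrt (by positivity)
  generalize Real.sqrt F = a at *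
  generalize Real.sqrt (1+s^2) = b at *
  have ha0 : 0 < a := by linarith
  have hb0 : 0 < b := by linarith
  have e : a⁻¹ - b⁻¹ = (b^2 - a^2) / (a * b * (a + b)) := by
    field_simp
    ring
  have e3 : s ^ (-3 : ℝ) = (s^3)⁻¹ := by
    rw [Real.rpow_neg hs0.le]; norm_cast
  have hd : s^3 / 2 ≤ a * b * (a + b) := by
    calc s^3/2 = (s/2) * s * s := by ring
      _ ≤ a * b * (a + b) := by gcongr; linarith
  have hn : 0 ≤ b^2 - a^2 := by rw [ha2, hb2]; linarith
  rw [e, e3, Real.norm_of_nonneg (by positivity)]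
  calc (b^2 - a^2) / (a * b * (a + b)) ≤ (1 + r₀^2) / (s^3/2) := by
        gcongr; rw [ha2, hb2]; linarith
    _ = _ := by field_simp

theorem stmt_14 (n : ℕ) (hn : 3 ≤ n) (m : ℝ) (hm : 0 < m)
    (f fm : ℝ → ℝ)
    (hf : ∀ s : ℝ, f s = 1 + s^2)
    (hfm : ∀ s : ℝ, 0 < s → fm s = 1 + s^2 - 2*m/s^(n-2))
    (r₀ : ℝ) (hr₀ : 0 < r₀) (hroot : r₀^n + r₀^(n-2) = 2*m) :
    (∀ r : ℝ, r₀ < r →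
      IntegrableOn (fun s : ℝ => fm s ^ (-(1/2) : ℝ)) (Set.Ioc r₀ r)) ∧
    ∃ L : ℝ, 0 < L ∧
      Tendsto (fun r : ℝ =>
          Real.exp (-(∫ s in r₀..r, fm s ^ (-(1/2) : ℝ))) /
          Real.exp (-(∫ s in (0 : ℝ)..r, f s ^ (-(1/2) : ℝ))))
        atTop (nhds L) := by
  have hlow : ∀ s, r₀ < s → s^2 - r₀^2 ≤ fm s := fun s hs => by
    rw [hfm s (hr₀.trans hs)]; exact aux_lower n hn m r₀ s hr₀ hroot hs
  have hup : ∀ s, r₀ < s → fm s ≤ 1 + s^2 := fun s hs => by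
    have := hr₀.trans hs
    rw [hfm s this]
    have : 0 ≤ 2*m/s^(n-2) := by positivity
    linarith
  have hpos : ∀ s, r₀ < s → 0 < fm s := fun s hs => by
    have := hlow s hs
    nlinarith
  have hcf : ContinuousOn fm (Set.Ioi r₀) := by
    have : ContinuousOn (fun s : ℝ => 1 + s^2 - 2*m/s^(n-2)) (Set.Ioi r₀) := by
      refine ContinuousOn.sub (by fun_prop) (ContinuousOn.div (by fun_prop) (by fun_prop) ?_)
      intro s hs
      exact pow_ne_zero _ (hr₀.trans hs).ne'
    exact this.congr fun s hs => hfm s (hr₀.trans hs)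
  have hcg : ContinuousOn (fun s : ℝ => fm s ^ (-(1/2) : ℝ)) (Set.Ioi r₀) :=
    hcf.rpow_const fun s hs => Or.inl (hpos s hs).ne'
  have hch : Continuous (fun s : ℝ => f s ^ (-(1/2) : ℝ)) := by
    have : Continuous f := by
      rw [show f = fun s => 1 + s^2 from funext hf]; fun_prop
    exact this.rpow_const fun s => Or.inl (by rw [hf]; positivity)
  have hA : ∀ r : ℝ, r₀ < r →
      IntegrableOn (fun s : ℝ => fm s ^ (-(1/2) : ℝ)) (Set.Ioc r₀ r) := by
    intro r hr
    have hi : IntervalIntegrable (fun s : ℝ => s ^ (-(1/2) : ℝ)) volume 0 (r - r₀) :=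
      intervalIntegral.intervalIntegrable_rpow' (by norm_num)
    have hi2 := (hi.comp_sub_right r₀).const_mul (r₀ ^ (-(1/2) : ℝ))
    simp only [zero_add, sub_add_cancel] at hi2
    rw [intervalIntegrable_iff_integrableOn_Ioc_of_le hr.le] at hi2
    refine Integrable.mono' hi2
      ((hcg.mono fun s hs => hs.1).aestronglyMeasurable measurableSet_Ioc) ?_
    refine (ae_restrict_iff' measurableSet_Ioc).2 (Eventually.of_forall fun s hs => ?_)
    have hs1 : 0 < s - r₀ := sub_pos.2 hs.1
    rw [Real.norm_of_nonneg (Real.rpow_nonneg (hpos s hs.1).le _),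
      ← Real.mul_rpow hr₀.le hs1.le]
    refine Real.rpow_le_rpow_of_nonpos (by positivity) ?_ (by norm_num)
    have := hlow s hs.1
    nlinarith
  refine ⟨hA, ?_⟩
  have hD : IntegrableOn (fun s : ℝ => fm s ^ (-(1/2) : ℝ) - f s ^ (-(1/2) : ℝ)) (Set.Ioi r₀) := by
    have h2 : r₀ < 2 * r₀ := by linarith
    rw [← Set.Ioc_union_Ioi_eq_Ioi h2.le]
    refine IntegrableOn.union ((hA _ h2).sub ?_) ?_
    · exact (hch.integrableOn_Icc).mono_set Set.Ioc_subset_Icc_self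
    · have hi := (integrableOn_Ioi_rpow_of_lt (a := (-3 : ℝ)) (by norm_num)
        (show 0 < 2 * r₀ by linarith)).const_mul (2 * (1 + r₀^2))
      refine Integrable.mono' hi (((hcg.sub hch.continuousOn).mono
        fun s (hs : 2 * r₀ < s) => h2.trans hs).aestronglyMeasurable measurableSet_Ioi) ?_
      refine (ae_restrict_iff' measurableSet_Ioi).2 (Eventually.of_forall fun s hs => ?_)
      have hs1 : r₀ < s := h2.trans hs
      rw [aux_rpow _ (hpos s hs1).le, hf, aux_rpow _ (by positivity)]
      exact aux_diff r₀ s _ hr₀ (le_of_lt hs) (hlow s hs1) (hup s hs1)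
  have hT := intervalIntegral_tendsto_integral_Ioi r₀ hD tendsto_id
  refine ⟨_, Real.exp_pos _, ((Real.continuous_exp.tendsto _).comp
    ((hT.neg).add_const (∫ s in (0:ℝ)..r₀, f s ^ (-(1/2) : ℝ)))).congr' ?_⟩
  filter_upwards [eventually_gt_atTop r₀] with r hr
  have hg : IntervalIntegrable (fun s : ℝ => fm s ^ (-(1/2) : ℝ)) volume r₀ r :=
    (intervalIntegrable_iff_integrableOn_Ioc_of_le hr.le).2 (hA r hr)
  rw [← Real.exp_sub]
  simp only [Function.comp, id]
  rw [intervalIntegral.integral_sub hg (hch.intervalIntegrable _ _),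
    ← intervalIntegral.integral_add_adjacent_intervals (hch.intervalIntegrable 0 r₀)
      (hch.intervalIntegrable r₀ r)]
  congr 1
  ring
end

section
/- Let n ≥ 3 be an integer and m > 0 a real number. Define f_m(s) := 1 + s² − 2m/s^(n−2) for s > 0, let r⋆ be the unique positive real with r⋆^n + r⋆^(n−2) = 2m, and define x_m(r) := exp(−∫_{r⋆}^r f_m(s)^(−1/2) ds) for r > r⋆. Then x_m is strictly decreasing on (r⋆, ∞), takes values in the open interval (0, 1), and maps (r⋆, ∞) bijectively onto (0, 1). -/
theorem stmt_15 (n : ℕ) (hn : 3 ≤ n) (m : ℝ) (hm : 0 < m)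
    (fm : ℝ → ℝ)
    (hfm : ∀ s : ℝ, 0 < s → fm s = 1 + s^2 - 2*m/s^(n-2))
    (r₀ : ℝ) (hr₀ : 0 < r₀) (hroot : r₀^n + r₀^(n-2) = 2*m)
    (xm : ℝ → ℝ)
    (hxm : ∀ r : ℝ, xm r = Real.exp (-(∫ s in r₀..r, fm s ^ (-(1/2) : ℝ)))) :
    StrictAntiOn xm (Set.Ioi r₀) ∧
    (∀ r : ℝ, r₀ < r → xm r ∈ Set.Ioo (0 : ℝ) 1) ∧
    Set.BijOn xm (Set.Ioi r₀) (Set.Ioo (0 : ℝ) 1) := by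
  have hlow : ∀ s, r₀ < s → r₀ * (s - r₀) ≤ fm s := by
    intro s hs
    have hs0 : 0 < s := hr₀.trans hs
    rw [hfm s hs0, ← hroot]
    have e : r₀ ^ n = r₀ ^ (n-2) * r₀^2 := by rw [← pow_add]; congr 1; omega
    have h1 : (r₀ ^ n + r₀ ^ (n-2)) / s ^ (n-2) ≤ r₀^2 + 1 := by
      rw [div_le_iff₀ (by positivity), e]
      have : r₀ ^ (n-2) ≤ s ^ (n-2) := pow_le_pow_left₀ hr₀.le hs.le _
      nlinarith [sq_nonneg r₀]
    nlinarith
  have hpos : ∀ s, r₀ < s → 0 < fm s := fun s hs =>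
    lt_of_lt_of_le (mul_pos hr₀ (sub_pos.2 hs)) (hlow s hs)
  have hup : ∀ s, r₀ < s → fm s ≤ (1 + s)^2 := by
    intro s hs
    have hs0 : 0 < s := hr₀.trans hs
    rw [hfm s hs0]
    have : 0 < 2 * m / s^(n-2) := by positivity
    nlinarith
  set g : ℝ → ℝ := fun s => fm s ^ (-(1/2) : ℝ) with hg
  have hgpos : ∀ s, r₀ < s → 0 < g s := fun s hs => Real.rpow_pos_of_pos (hpos s hs) _
  have hgle : ∀ s, r₀ < s → g s ≤ r₀ ^ (-(1/2) : ℝ) * (s - r₀) ^ (-(1/2) : ℝ) := by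
    intro s hs
    rw [← Real.mul_rpow hr₀.le (sub_pos.2 hs).le]
    exact Real.rpow_le_rpow_of_nonpos (mul_pos hr₀ (sub_pos.2 hs)) (hlow s hs) (by norm_num)
  have hgge : ∀ s, r₀ < s → (1 + s)⁻¹ ≤ g s := by
    intro s hs
    have hs0 : 0 < s := hr₀.trans hs
    have h := Real.rpow_le_rpow_of_nonpos (z := -(1/2)) (hpos s hs) (hup s hs) (by norm_num)
    have e : ((1 + s)^2 : ℝ) ^ (-(1/2) : ℝ) = (1 + s)⁻¹ := by
      rw [← Real.rpow_natCast, ← Real.rpow_mul (by positivity), ← Real.rpow_neg_one]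
      norm_num
    rwa [e] at h
  have hcont : ContinuousOn g (Set.Ioi r₀) := by
    have hf : ContinuousOn fm (Set.Ioi r₀) := by
      have : ContinuousOn (fun s : ℝ => 1 + s^2 - 2*m/s^(n-2)) (Set.Ioi r₀) := by
        apply ContinuousOn.sub (by fun_prop)
        apply ContinuousOn.div (by fun_prop) (by fun_prop)
        intro s hs
        exact pow_ne_zero _ (hr₀.trans hs).ne'
      exact this.congr fun s hs => hfm s (hr₀.trans hs)
    exact hf.rpow_const fun s hs => Or.inl (hpos s hs).ne'
  have hint0 : ∀ r, r₀ ≤ r → IntervalIntegrable g MeasureTheory.volume r₀ r := by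
    intro r hr
    have h1 : IntervalIntegrable (fun s : ℝ => s ^ (-(1/2) : ℝ)) MeasureTheory.volume
        (r₀ - r₀) (r - r₀) :=
      intervalIntegral.intervalIntegrable_rpow' (by norm_num)
    have h2 := (h1.comp_sub_right r₀).const_mul (r₀ ^ (-(1/2) : ℝ))
    simp only [sub_add_cancel] at h2
    rw [intervalIntegrable_iff_integrableOn_Ioc_of_le hr] at h2 ⊢
    refine MeasureTheory.Integrable.mono' h2 ?_ ?_
    · exact (hcont.mono fun s hs => hs.1).aestronglyMeasurable measurableSet_Ioc
    · refine (MeasureTheory.ae_restrict_iff' measurableSet_Ioc).2 (Filter.Eventually.of_forall ?_)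
      intro s hs
      rw [Real.norm_of_nonneg (hgpos s hs.1).le]
      exact hgle s hs.1
  have hmono : ∀ a b, r₀ ≤ a → a < b → (∫ s in r₀..a, g s) < ∫ s in r₀..b, g s := by
    intro a b ha hab
    have hi : IntervalIntegrable g MeasureTheory.volume a b :=
      (hint0 a ha).symm.trans (hint0 b (ha.trans hab.le))
    have h := intervalIntegral.intervalIntegral_pos_of_pos_on hi
      (fun s hs => hgpos s (lt_of_le_of_lt ha hs.1)) hab
    rw [← intervalIntegral.integral_add_adjacent_intervals (hint0 a ha) hi]
    linarith
  have hanti : StrictAntiOn xm (Set.Ioi r₀) := by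
    intro a ha b _ hab
    rw [hxm, hxm]
    exact Real.exp_lt_exp.2 (neg_lt_neg (hmono a b (le_of_lt ha) hab))
  have hmaps : ∀ r : ℝ, r₀ < r → xm r ∈ Set.Ioo (0 : ℝ) 1 := by
    intro r hr
    rw [hxm]
    refine ⟨Real.exp_pos _, Real.exp_lt_one_iff.2 ?_⟩
    have := hmono r₀ r le_rfl hr
    rw [intervalIntegral.integral_same] at this
    linarith
  refine ⟨hanti, hmaps, hmaps, hanti.injOn, ?_⟩
  intro y hy
  have ht : 0 < -Real.log y := neg_pos.2 (Real.log_neg hy.1 hy.2)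
  obtain ⟨R, hR⟩ : ∃ R, R = (1 + r₀) * Real.exp (-Real.log y) - 1 := ⟨_, rfl⟩
  have hRr : r₀ < R := by
    have := Real.one_lt_exp_iff.2 ht
    rw [hR]; nlinarith
  have hlog : ∫ s in r₀..R, (1 + s)⁻¹ = -Real.log y := by
    have hne : ∀ s ∈ Set.uIcc r₀ R, (1 + s) ≠ 0 := by
      intro s hs
      rw [Set.uIcc_of_le hRr.le] at hs
      have := hs.1
      linarith
    rw [intervalIntegral.integral_eq_sub_of_hasDerivAt (f := fun s => Real.log (1 + s))]
    · rw [show 1 + R = (1 + r₀) * Real.exp (-Real.log y) by rw [hR]; ring,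
        Real.log_mul (by positivity) (Real.exp_ne_zero _), Real.log_exp]
      ring
    · intro s hs
      simpa using ((hasDerivAt_id s).const_add 1).log (hne s hs)
    · exact (ContinuousOn.inv₀ (by fun_prop) hne).intervalIntegrable
  have hge : -Real.log y ≤ ∫ s in r₀..R, g s := by
    rw [← hlog]
    refine intervalIntegral.integral_mono_on_of_le_Ioo hRr.le ?_ (hint0 R hRr.le)
      (fun s hs => hgge s hs.1)
    refine (ContinuousOn.inv₀ (by fun_prop) ?_).intervalIntegrable
    intro s hs
    rw [Set.uIcc_of_le hRr.le] at hs
    have := hs.1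
    linarith
  have hc : ContinuousOn (fun r => ∫ s in r₀..r, g s) (Set.Icc r₀ R) := by
    have := intervalIntegral.continuousOn_primitive_interval' (hint0 R hRr.le)
      Set.left_mem_uIcc
    rwa [Set.uIcc_of_le hRr.le] at this
  obtain ⟨r, hr, hrt⟩ := intermediate_value_Icc hRr.le hc
    (show -Real.log y ∈ Set.Icc _ _ from ⟨by simpa using ht.le, hge⟩)
  refine ⟨r, ?_, ?_⟩
  · refine lt_of_le_of_ne hr.1 ?_
    rintro rfl
    simp only [intervalIntegral.integral_same] at hrt
    linarith
  · rw [hxm]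
    change Real.exp (-(∫ s in r₀..r, g s)) = y
    simp only at hrt
    rw [hrt, neg_neg, Real.exp_log hy.1]
end

section
/- Let m > 0 be a real number, define f_m(s) := 1 + s² − 2m/s² for s > 0, and let r⋆ be the unique positive real with r⋆⁴ + r⋆² = 2m. Then for every r > r⋆, the function s ↦ f_m(s)^(−1/2) is integrable on (r⋆, r], and exp(−∫_{r⋆}^r f_m(s)^(−1/2) ds) = √((2r⋆² + 1) / (2r·√(f_m(r)) + 2r² + 1)). -/
open MeasureTheory

theorem stmt_17 (m : ℝ) (hm : 0 < m)
    (fm : ℝ → ℝ) (hfm : ∀ s : ℝ, 0 < s → fm s = 1 + s^2 - 2*m/s^2)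
    (r₀ : ℝ) (hr₀ : 0 < r₀) (hroot : r₀^4 + r₀^2 = 2*m) :
    ∀ r : ℝ, r₀ < r →
      IntegrableOn (fun s : ℝ => fm s ^ (-(1/2) : ℝ)) (Set.Ioc r₀ r) ∧
      Real.exp (-(∫ s in r₀..r, fm s ^ (-(1/2) : ℝ))) =
        Real.sqrt ((2*r₀^2 + 1) / (2*r*Real.sqrt (fm r) + 2*r^2 + 1)) := by
  intro r hr
  have hP : ∀ s, r₀ < s → 0 < s^4 + s^2 - 2*m := by
    intro s hs
    have h4 : r₀^4 < s^4 := by gcongr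
    have h2 : r₀^2 < s^2 := by gcongr
    linarith
  have hsq : ∀ s, r₀ < s → Real.sqrt (s^4 + s^2 - 2*m) = s * Real.sqrt (fm s) := by
    intro s hs
    have h0 : 0 < s := hr₀.trans hs
    have : s^4 + s^2 - 2*m = s^2 * fm s := by
      rw [hfm s h0]; field_simp; ring
    rw [this, Real.sqrt_mul (by positivity), Real.sqrt_sq h0.le]
  have hfp : ∀ s, r₀ < s → 0 < fm s := by
    intro s hs
    have h0 : 0 < s := hr₀.trans hs
    have h1 : fm s = (s^4 + s^2 - 2*m) / s^2 := by
      rw [hfm s h0]; field_simp; ring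
    rw [h1]
    exact div_pos (hP s hs) (by positivity)
  have hD : ∀ s : ℝ, 0 < 2 * Real.sqrt (s^4 + s^2 - 2*m) + 2*s^2 + 1 := by
    intro s; positivity
  let G : ℝ → ℝ := fun s => 1/2 * Real.log (2 * Real.sqrt (s^4 + s^2 - 2*m) + 2*s^2 + 1)
  have hcont : ContinuousOn G (Set.Icc r₀ r) := by
    apply Continuous.continuousOn
    refine continuous_const.mul (Continuous.log ?_ fun s => (hD s).ne')
    fun_prop
  have hderiv : ∀ s ∈ Set.Ioo r₀ r, HasDerivAt G (fm s ^ (-(1/2) : ℝ)) s := by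
    intro s hs
    have h0 : 0 < s := hr₀.trans hs.1
    have hPs := hP s hs.1
    have hq : 0 < Real.sqrt (fm s) := Real.sqrt_pos.2 (hfp s hs.1)
    have hp : HasDerivAt (fun s : ℝ => s^4 + s^2 - 2*m) (4*s^3 + 2*s) s := by
      have := ((hasDerivAt_pow 4 s).add (hasDerivAt_pow 2 s)).sub_const (2*m)
      exact this.congr_deriv (by norm_num)
    have h2 : HasDerivAt (fun s : ℝ => 2*s^2) (4*s) s := by
      have := (hasDerivAt_pow 2 s).const_mul 2
      exact this.congr_deriv (by norm_num; ring)
    have h := (((((hp.sqrt hPs.ne').const_mul 2).add h2).add_const 1).log (hD s).ne').const_mul (1/2)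
    refine h.congr_deriv ?_
    have hd := hD s
    simp only [Pi.add_apply]
    rw [Real.rpow_neg (hfp s hs.1).le, ← Real.sqrt_eq_rpow]
    rw [hsq s hs.1] at hd ⊢
    field_simp
    ring
  have hint : IntegrableOn (fun s : ℝ => fm s ^ (-(1/2) : ℝ)) (Set.Ioc r₀ r) :=
    intervalIntegral.integrableOn_deriv_of_nonneg hcont hderiv
      (fun s hs => Real.rpow_nonneg (hfp s hs.1).le _)
  refine ⟨hint, ?_⟩
  rw [intervalIntegral.integral_eq_sub_of_hasDerivAt_of_le hr.le hcont hderiv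
    ((intervalIntegrable_iff_integrableOn_Ioc_of_le hr.le).2 hint)]
  have hA : (0:ℝ) < 2*r₀^2 + 1 := by positivity
  have hB := hD r
  have e0 : G r₀ = 1/2 * Real.log (2*r₀^2+1) := by
    simp only [G]
    rw [hroot, sub_self, Real.sqrt_zero]; simp
  have e1 : 2*r*Real.sqrt (fm r) + 2*r^2 + 1
      = 2 * Real.sqrt (r^4 + r^2 - 2*m) + 2*r^2 + 1 := by
    rw [hsq r hr]; ring
  rw [e0, e1, Real.sqrt_eq_rpow, Real.rpow_def_of_pos (div_pos hA hB),
    Real.log_div hA.ne' hB.ne']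
  simp only [G]
  congr 1
  ring
end

section
/- On ℝ³ with indices in {0, 1, 2}, let η be the Minkowski form with η₀₀ = −1, η₁₁ = η₂₂ = 1 and zero off-diagonal entries (its inverse η^{ij} has the same entries), and let ε_{ijk} be the totally antisymmetric symbol with ε₀₁₂ = 1. Let J : {0,1,2}³ → ℝ satisfy: J_{ijk} = −J_{jik}; J_{ijk} + J_{jki} + J_{kij} = 0; and Σ_{j,k} η^{jk} J_{ijk} = 0 for every i. Define Y_{ij} := (1/2) Σ_{k,l,a,b} η^{ka} η^{lb} ε_{iab} J_{klj}. Then Y is symmetric (Y_{ij} = Y_{ji} for all i, j) and η-trace-free (Σ_{i,j} η^{ij} Y_{ij} = 0). -/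
theorem stmt_18
    (η : Fin 3 → Fin 3 → ℝ)
    (hη : ∀ i j, η i j = if i = j then (if i = 0 then (-1 : ℝ) else 1) else 0)
    (ε : Fin 3 → Fin 3 → Fin 3 → ℝ)
    (hε0 : ε 0 1 2 = 1)
    (hε1 : ∀ i j k, ε i j k = -ε j i k)
    (hε2 : ∀ i j k, ε i j k = -ε i k j)
    (J : Fin 3 → Fin 3 → Fin 3 → ℝ)
    (hJ1 : ∀ i j k, J i j k = -J j i k)
    (hJ2 : ∀ i j k, J i j k + J j k i + J k i j = 0)
    (hJ3 : ∀ i, (∑ j, ∑ k, η j k * J i j k) = 0)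
    (Y : Fin 3 → Fin 3 → ℝ)
    (hY : ∀ i j, Y i j =
      (1/2) * ∑ k, ∑ l, ∑ a, ∑ b, η k a * η l b * ε i a b * J k l j) :
    (∀ i j, Y i j = Y j i) ∧ (∑ i, ∑ j, η i j * Y i j) = 0 := by
  have e1 : ∀ i k, ε i i k = 0 := fun i k => by linarith [hε1 i i k]
  have e2 : ∀ i k, ε i k k = 0 := fun i k => by linarith [hε2 i k k]
  have e3 : ∀ i k, ε i k i = 0 := fun i k => by linarith [hε2 i k i, e1 i k]
  have d1 : ε 0 2 1 = -1 := by linarith [hε2 0 2 1]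
  have d2 : ε 1 0 2 = -1 := by linarith [hε1 1 0 2]
  have d3 : ε 1 2 0 = 1 := by linarith [hε2 1 2 0]
  have d4 : ε 2 0 1 = 1 := by linarith [hε1 2 0 1]
  have d5 : ε 2 1 0 = -1 := by linarith [hε1 2 1 0]
  have y0 : ∀ j, Y 0 j = J 1 2 j := fun j => by
    rw [hY]
    simp [Fin.sum_univ_three, hη, e1, e2, e3, hε0, d1]
    linarith [hJ1 1 2 j]
  have y1 : ∀ j, Y 1 j = -J 2 0 j := fun j => by
    rw [hY]
    simp [Fin.sum_univ_three, hη, e1, e2, e3, d2, d3]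
    linarith [hJ1 2 0 j]
  have y2 : ∀ j, Y 2 j = -J 0 1 j := fun j => by
    rw [hY]
    simp [Fin.sum_univ_three, hη, e1, e2, e3, d4, d5]
    linarith [hJ1 0 1 j]
  have t : ∀ i, -J i 0 0 + J i 1 1 + J i 2 2 = 0 := fun i => by
    have h := hJ3 i
    simp [Fin.sum_univ_three, hη] at h
    linarith
  have z : ∀ i k, J i i k = 0 := fun i k => by linarith [hJ1 i i k]
  have s01 : Y 0 1 = Y 1 0 := by
    rw [y0, y1]; linarith [t 2, z 2 2, hJ1 1 2 1]
  have s02 : Y 0 2 = Y 2 0 := by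
    rw [y0, y2]; linarith [t 1, z 1 1, hJ1 0 1 0]
  have s12 : Y 1 2 = Y 2 1 := by
    rw [y1, y2]; linarith [t 0, z 0 0, hJ1 2 0 2]
  constructor
  · intro i j
    fin_cases i <;> fin_cases j <;>
      first | rfl | exact s01 | exact s02 | exact s12 | exact s01.symm | exact s02.symm | exact s12.symm
  · simp [Fin.sum_univ_three, hη, y0, y1, y2]
    linarith [hJ2 0 1 2]
end

section
/- Fix an integer n ≥ 3. On ℝ^{n+1} with indices in {0, 1, …, n}, let η be the Minkowski form with η₀₀ = −1, η_{αα} = 1 for 1 ≤ α ≤ n, and zero off-diagonal entries (its inverse η^{αβ} has the same entries); call indices in {0, …, n−1} tangential and let h denote the restriction of η to tangential indices. Let Q : {0,…,n}⁴ → ℝ satisfy: Q_{αβμν} = −Q_{βαμν}; Q_{αβμν} = −Q_{αβνμ}; Q_{αβμν} + Q_{αμνβ} + Q_{ανβμ} = 0; and Σ_{α,μ} η^{αμ} Q_{αβμν} = 0 for all β, ν. For tangential indices i, j, k, l define E_{ij} := Q_{n i n j}, M_{ijk} := Q_{n k i j}, and P_{ijkl} := Q_{ijkl} + (1/(n−2))·(h_{ik}E_{lj}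 − h_{il}E_{kj} − h_{jk}E_{li} + h_{jl}E_{ki}); extend E, M, P to all indices in {0,…,n} by setting them equal to 0 whenever one of their indices equals n. Then: (a) E is symmetric and Σ_{i,j} h^{ij} E_{ij} = 0; (b) M satisfies M_{ijk} = −M_{jik}, M_{ijk} + M_{jki} + M_{kij} = 0 and Σ_{j,k} h^{jk} M_{ijk} = 0; (c) P satisfies the same four conditions as Q with h in place of η; (d) for all α, β, μ, ρ ∈ {0,…,n}: Q_{αβμρ} = P_{αβμρ} + (ω_α M_{μρβ} − ω_β M_{μρα}) + (ω_μ M_{αβρ} − ω_ρ M_{αβμ}) − (1/(n−2))·(X_{αμ}E_{ρβ} − X_{αρ}E_{μβ} − X_{βμ}E_{ρα} + X_{βρ}E_{μα}), where ω_α := 1 if α = n and 0 otherwise, and X_{αβ} := η_{αβ} − (n−1)·ω_α·ω_β. -/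
theorem stmt_19 (n : ℕ) (hn : 3 ≤ n)
    (η : Fin (n+1) → Fin (n+1) → ℝ)
    (hη : ∀ α β, η α β = if α = β then (if α = 0 then (-1 : ℝ) else 1) else 0)
    (Q : Fin (n+1) → Fin (n+1) → Fin (n+1) → Fin (n+1) → ℝ)
    (hQ1 : ∀ α β μ ν, Q α β μ ν = -Q β α μ ν)
    (hQ2 : ∀ α β μ ν, Q α β μ ν = -Q α β ν μ)
    (hQ3 : ∀ α β μ ν, Q α β μ ν + Q α μ ν β + Q α ν β μ = 0)
    (hQ4 : ∀ β ν, (∑ α, ∑ μ, η α μ * Q α β μ ν) = 0)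
    (E : Fin (n+1) → Fin (n+1) → ℝ)
    (hE : ∀ α β, E α β =
      if α ≠ Fin.last n ∧ β ≠ Fin.last n then Q (Fin.last n) α (Fin.last n) β else 0)
    (M : Fin (n+1) → Fin (n+1) → Fin (n+1) → ℝ)
    (hM : ∀ α β γ, M α β γ =
      if α ≠ Fin.last n ∧ β ≠ Fin.last n ∧ γ ≠ Fin.last n then Q (Fin.last n) γ α β else 0)
    (P : Fin (n+1) → Fin (n+1) → Fin (n+1) → Fin (n+1) → ℝ)
    (hP : ∀ α β γ δ, P α β γ δ =
      if α ≠ Fin.last n ∧ β ≠ Fin.last n ∧ γ ≠ Fin.last n ∧ δ ≠ Fin.last n then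
        Q α β γ δ + (1/((n : ℝ) - 2)) *
          (η α γ * E δ β - η α δ * E γ β - η β γ * E δ α + η β δ * E γ α)
      else 0)
    (ω : Fin (n+1) → ℝ) (hω : ∀ α, ω α = if α = Fin.last n then 1 else 0)
    (X : Fin (n+1) → Fin (n+1) → ℝ)
    (hX : ∀ α β, X α β = η α β - ((n : ℝ) - 1) * ω α * ω β) :
    ((∀ α β, E α β = E β α) ∧
      (∑ i : Fin n, ∑ j : Fin n,
        η i.castSucc j.castSucc * E i.castSucc j.castSucc) = 0) ∧
    ((∀ α β γ, M α β γ = -M β α γ) ∧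
      (∀ α β γ, M α β γ + M β γ α + M γ α β = 0) ∧
      (∀ α, (∑ j : Fin n, ∑ k : Fin n,
        η j.castSucc k.castSucc * M α j.castSucc k.castSucc) = 0)) ∧
    ((∀ α β γ δ, P α β γ δ = -P β α γ δ) ∧
      (∀ α β γ δ, P α β γ δ = -P α β δ γ) ∧
      (∀ α β γ δ, P α β γ δ + P α γ δ β + P α δ β γ = 0) ∧
      (∀ β δ, (∑ i : Fin n, ∑ k : Fin n,
        η i.castSucc k.castSucc * P i.castSucc β k.castSucc δ) = 0)) ∧
    (∀ α β μ ρ, Q α β μ ρ = P α β μ ρ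
        + (ω α * M μ ρ β - ω β * M μ ρ α) + (ω μ * M α β ρ - ω ρ * M α β μ)
        - (1/((n : ℝ) - 2)) *
            (X α μ * E ρ β - X α ρ * E μ β - X β μ * E ρ α + X β ρ * E μ α)) := by
  have hpair : ∀ a b c d, Q a b c d = Q c d a b := by
    intro a b c d
    linarith [hQ3 a b c d, hQ3 b c d a, hQ3 c d a b, hQ3 d a b c,
      hQ1 a b c d, hQ1 b c d a, hQ1 c d a b, hQ1 d a b c,
      hQ2 a b c d, hQ2 b c d a, hQ2 c d a b, hQ2 d a b c,
      hQ1 a c d b, hQ2 a c d b, hQ1 a d b c, hQ2 a d b c,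
      hQ1 b d a c, hQ2 b d a c, hQ1 b a c d, hQ2 b a c d,
      hQ1 c a b d, hQ2 c a b d, hQ1 c b d a, hQ2 c b d a,
      hQ1 d b c a, hQ2 d b c a, hQ1 d c a b, hQ2 d c a b,
      hQ1 a c b d, hQ2 a c b d, hQ1 b d c a, hQ2 b d c a, hQ1 d b a c, hQ1 c a d b]
  have hz1 : ∀ a c d, Q a a c d = 0 := fun a c d => by linarith [hQ1 a a c d]
  have hz2 : ∀ a c d, Q c d a a = 0 := fun a c d => by linarith [hQ2 c d a a]
  have hlast0 : Fin.last n ≠ 0 := by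
    intro h
    have := congrArg Fin.val h
    simp at this
    omega
  have hηs : ∀ a b, η a b = η b a := by
    intro a b
    rw [hη, hη]
    by_cases h : a = b
    · subst h; rfl
    · rw [if_neg h, if_neg (Ne.symm h)]
  have hη0 : ∀ a b, a ≠ b → η a b = 0 := fun a b h => by rw [hη, if_neg h]
  have hηl : η (Fin.last n) (Fin.last n) = 1 := by rw [hη]; simp [hlast0]
  have hηsq : ∀ a, η a a * η a a = 1 := by
    intro a
    rw [hη]
    by_cases h : a = 0 <;> simp [h]
  have hdiag : ∀ f : Fin n → Fin n → ℝ,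
      (∑ i : Fin n, ∑ j : Fin n, η i.castSucc j.castSucc * f i j)
        = ∑ i : Fin n, η i.castSucc i.castSucc * f i i := by
    intro f
    refine Finset.sum_congr rfl fun i _ => ?_
    refine Finset.sum_eq_single i (fun j _ hj => ?_) (by simp)
    rw [hη0 _ _ (fun h => hj (Fin.castSucc_injective n h).symm), zero_mul]
  have htr : ∀ b d, (∑ i : Fin n, η i.castSucc i.castSucc * Q i.castSucc b i.castSucc d)
      = - Q (Fin.last n) b (Fin.last n) d := by
    intro b d
    have h := hQ4 b d
    have h2 : (∑ α, ∑ μ, η α μ * Q α b μ d) = ∑ α, η α α * Q α b α d := by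
      refine Finset.sum_congr rfl fun i _ => ?_
      refine Finset.sum_eq_single i (fun j _ hj => ?_) (by simp)
      rw [hη0 _ _ (Ne.symm hj), zero_mul]
    rw [h2, Fin.sum_univ_castSucc, hηl] at h
    linarith
  have hEs : ∀ α β, E α β = E β α := by
    intro a b
    rw [hE, hE, hpair (Fin.last n) a]
    simp only [and_comm]
  have hEt : ∀ i j : Fin n, E i.castSucc j.castSucc
      = Q (Fin.last n) i.castSucc (Fin.last n) j.castSucc := by
    intro i j
    rw [hE, if_pos ⟨Fin.castSucc_ne_last i, Fin.castSucc_ne_last j⟩]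
  have hEtr : (∑ i : Fin n, η i.castSucc i.castSucc * E i.castSucc i.castSucc) = 0 := by
    have h := htr (Fin.last n) (Fin.last n)
    rw [hz1, neg_zero] at h
    rw [← h]
    refine Finset.sum_congr rfl fun i _ => ?_
    rw [hEt, hpair, hQ1, hQ2, neg_neg]
  have hEl1 : ∀ a, E (Fin.last n) a = 0 := fun a => by rw [hE]; simp
  have hEl2 : ∀ a, E a (Fin.last n) = 0 := fun a => by rw [hE]; simp
  have hMl1 : ∀ a b, M (Fin.last n) a b = 0 := fun a b => by rw [hM]; simp
  have hMl2 : ∀ a b, M a (Fin.last n) b = 0 := fun a b => by rw [hM]; simp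
  have hMl3 : ∀ a b, M a b (Fin.last n) = 0 := fun a b => by rw [hM]; simp
  have hMt : ∀ i j k : Fin n, M i.castSucc j.castSucc k.castSucc
      = Q (Fin.last n) k.castSucc i.castSucc j.castSucc := by
    intro i j k
    rw [hM, if_pos ⟨Fin.castSucc_ne_last i, Fin.castSucc_ne_last j, Fin.castSucc_ne_last k⟩]
  have hPl1 : ∀ a b c, P (Fin.last n) a b c = 0 := fun a b c => by rw [hP]; simp
  have hPl2 : ∀ a b c, P a (Fin.last n) b c = 0 := fun a b c => by rw [hP]; simp
  have hPl3 : ∀ a b c, P a b (Fin.last n) c = 0 := fun a b c => by rw [hP]; simp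
  have hPl4 : ∀ a b c, P a b c (Fin.last n) = 0 := fun a b c => by rw [hP]; simp
  have hPt : ∀ i j k l : Fin n, P i.castSucc j.castSucc k.castSucc l.castSucc
      = Q i.castSucc j.castSucc k.castSucc l.castSucc + (1/((n : ℝ) - 2)) *
          (η i.castSucc k.castSucc * E l.castSucc j.castSucc
            - η i.castSucc l.castSucc * E k.castSucc j.castSucc
            - η j.castSucc k.castSucc * E l.castSucc i.castSucc
            + η j.castSucc l.castSucc * E k.castSucc i.castSucc) := by
    intro i j k l
    rw [hP, if_pos ⟨Fin.castSucc_ne_last i, Fin.castSucc_ne_last j, Fin.castSucc_ne_last k,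
      Fin.castSucc_ne_last l⟩]
  have hn2 : (n : ℝ) - 2 ≠ 0 := by
    have : (3 : ℝ) ≤ n := by exact_mod_cast hn
    linarith
  have hηl1 : ∀ i : Fin n, η (Fin.last n) i.castSucc = 0 :=
    fun i => hη0 _ _ (Fin.castSucc_ne_last i).symm
  have hηl2 : ∀ i : Fin n, η i.castSucc (Fin.last n) = 0 :=
    fun i => hη0 _ _ (Fin.castSucc_ne_last i)
  have hωt : ∀ i : Fin n, ω i.castSucc = 0 :=
    fun i => by rw [hω, if_neg (Fin.castSucc_ne_last i)]
  have hωl : ω (Fin.last n) = 1 := by rw [hω, if_pos rfl]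
  have hcontr : ∀ (d : Fin n) (f : Fin n → ℝ),
      (∑ i : Fin n, η i.castSucc i.castSucc * (η i.castSucc d.castSucc * f i)) = f d := by
    intro d f
    rw [Finset.sum_eq_single d]
    · rw [← mul_assoc, hηsq, one_mul]
    · intro j _ hj
      rw [hη0 _ _ (fun h => hj (Fin.castSucc_injective n h)), zero_mul, mul_zero]
    · simp
  refine ⟨⟨hEs, ?_⟩, ⟨?_, ?_, ?_⟩, ⟨?_, ?_, ?_, ?_⟩, ?_⟩
  · rw [hdiag fun i j => E i.castSucc j.castSucc]
    exact hEtr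
  · intro a b c
    induction a using Fin.lastCases with
    | last => simp [hMl1, hMl2]
    | cast a =>
    induction b using Fin.lastCases with
    | last => simp [hMl1, hMl2]
    | cast b =>
    induction c using Fin.lastCases with
    | last => simp [hMl3]
    | cast c =>
    rw [hMt, hMt, hQ2]
  · intro a b c
    induction a using Fin.lastCases with
    | last => simp [hMl1, hMl2, hMl3]
    | cast a =>
    induction b using Fin.lastCases with
    | last => simp [hMl1, hMl2, hMl3]
    | cast b =>
    induction c using Fin.lastCases with
    | last => simp [hMl1, hMl2, hMl3]
    | cast c =>
    rw [hMt, hMt, hMt]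
    linarith [hQ3 (Fin.last n) c.castSucc a.castSucc b.castSucc]
  · intro a
    rw [hdiag fun j k => M a j.castSucc k.castSucc]
    induction a using Fin.lastCases with
    | last => simp [hMl1]
    | cast a =>
    have h := htr (Fin.last n) a.castSucc
    rw [hz1, neg_zero] at h
    rw [← h]
    refine Finset.sum_congr rfl fun i _ => ?_
    rw [hMt, hQ1, hQ2, neg_neg]
  · intro a b c d
    induction a using Fin.lastCases with
    | last => simp [hPl1, hPl2]
    | cast a =>
    induction b using Fin.lastCases with
    | last => simp [hPl1, hPl2]
    | cast b =>
    induction c using Fin.lastCases with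
    | last => simp [hPl3]
    | cast c =>
    induction d using Fin.lastCases with
    | last => simp [hPl4]
    | cast d =>
    rw [hPt, hPt, hQ1]
    ring
  · intro a b c d
    induction a using Fin.lastCases with
    | last => simp [hPl1]
    | cast a =>
    induction b using Fin.lastCases with
    | last => simp [hPl2]
    | cast b =>
    induction c using Fin.lastCases with
    | last => simp [hPl3, hPl4]
    | cast c =>
    induction d using Fin.lastCases with
    | last => simp [hPl3, hPl4]
    | cast d =>
    rw [hPt, hPt, hQ2]
    ring
  · intro a b c d
    induction a using Fin.lastCases with
    | last => simp [hPl1]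
    | cast a =>
    induction b using Fin.lastCases with
    | last => simp [hPl2, hPl3, hPl4]
    | cast b =>
    induction c using Fin.lastCases with
    | last => simp [hPl2, hPl3, hPl4]
    | cast c =>
    induction d using Fin.lastCases with
    | last => simp [hPl2, hPl3, hPl4]
    | cast d =>
    rw [hPt, hPt, hPt, hEs d.castSucc b.castSucc, hEs c.castSucc b.castSucc,
      hEs d.castSucc c.castSucc, hηs c.castSucc b.castSucc, hηs d.castSucc b.castSucc,
      hηs d.castSucc c.castSucc]
    linear_combination hQ3 a.castSucc b.castSucc c.castSucc d.castSucc
  · intro b d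
    rw [hdiag fun i k => P i.castSucc b k.castSucc d]
    induction b using Fin.lastCases with
    | last => simp [hPl2]
    | cast b =>
    induction d using Fin.lastCases with
    | last => simp [hPl4]
    | cast d =>
    have e : ∀ i : Fin n, η i.castSucc i.castSucc * P i.castSucc b.castSucc i.castSucc d.castSucc
        = η i.castSucc i.castSucc * Q i.castSucc b.castSucc i.castSucc d.castSucc
          + (1/((n : ℝ) - 2)) * (E d.castSucc b.castSucc
            - η i.castSucc i.castSucc * (η i.castSucc d.castSucc * E i.castSucc b.castSucc)
            - η i.castSucc i.castSucc * (η i.castSucc b.castSucc * E d.castSucc i.castSucc)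
            + η b.castSucc d.castSucc * (η i.castSucc i.castSucc * E i.castSucc i.castSucc)) := by
      intro i
      rw [hPt, hηs b.castSucc i.castSucc]
      linear_combination (1/((n : ℝ) - 2)) * E d.castSucc b.castSucc * hηsq i.castSucc
    rw [Finset.sum_congr rfl fun i _ => e i, Finset.sum_add_distrib, htr, ← Finset.mul_sum,
      Finset.sum_add_distrib, Finset.sum_sub_distrib, Finset.sum_sub_distrib,
      hcontr d fun i => E i.castSucc b.castSucc, hcontr b fun i => E d.castSucc i.castSucc,
      ← Finset.mul_sum, hEtr, ← hEt, hEs b.castSucc d.castSucc]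
    simp only [Finset.sum_const, Finset.card_univ, Fintype.card_fin, nsmul_eq_mul]
    field_simp
    ring
  · intro a b c d
    simp only [hX]
    induction a using Fin.lastCases with
    | last =>
      induction b using Fin.lastCases with
      | last => rw [hz1]; simp [hPl1, hMl3, hMl1]
      | cast b =>
      induction c using Fin.lastCases with
      | last =>
        induction d using Fin.lastCases with
        | last => rw [hz2]; simp [hPl3, hMl1, hMl2]
        | cast d =>
        simp only [hPl1, hMl1, hωt, hωl, hηl, hηl1, hηl2, hEl1, hEl2]
        rw [hEs, hEt]
        field_simp
        ring
      | cast c =>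
        induction d using Fin.lastCases with
        | last =>
          simp only [hPl1, hMl1, hMl2, hωt, hωl, hηl, hηl1, hηl2, hEl1, hEl2]
          rw [hEs, hEt, hQ2]
          field_simp
          ring
        | cast d =>
        simp only [hPl1, hMl1, hMl3, hωt, hωl, hηl, hηl1, hηl2, hEl1, hEl2, hMt]
        ring
    | cast a =>
      induction b using Fin.lastCases with
      | last =>
        induction c using Fin.lastCases with
        | last =>
          induction d using Fin.lastCases with
          | last => rw [hz2]; simp [hPl3, hMl2]
          | cast d =>
          simp only [hPl2, hMl1, hMl2, hMl3, hωt, hωl, hηl, hηl1, hηl2, hEl1, hEl2]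
          rw [hEs, hEt, hQ1]
          field_simp
          ring
        | cast c =>
          induction d using Fin.lastCases with
          | last =>
            simp only [hPl2, hMl1, hMl2, hMl3, hωt, hωl, hηl, hηl1, hηl2, hEl1, hEl2]
            rw [hEs, hEt, hQ1, hQ2]
            field_simp
            ring
          | cast d =>
          simp only [hPl2, hMl2, hMl3, hωt, hωl, hηl, hηl1, hηl2, hEl1, hEl2, hMt]
          rw [hQ1]
          ring
      | cast b =>
        induction c using Fin.lastCases with
        | last =>
          induction d using Fin.lastCases with
          | last => rw [hz2]; simp [hPl3, hMl1, hMl3]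
          | cast d =>
          simp only [hPl3, hMl1, hMl3, hωt, hωl, hηl, hηl1, hηl2, hEl1, hEl2, hMt]
          rw [hpair]
          ring
        | cast c =>
          induction d using Fin.lastCases with
          | last =>
            simp only [hPl4, hMl2, hMl3, hωt, hωl, hηl, hηl1, hηl2, hEl1, hEl2, hMt]
            rw [hpair, hQ1]
            ring
          | cast d =>
          simp only [hPt, hωt]
          ring
end
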